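/- For h ≥ 2, the polynomials w = x_2x_3 − x_1x_4, g_i = x_1^ix_3^{h−i+1} − x_2^{i+1}x_4^{h−i} (0 ≤ i ≤ h−1), g_h = x_2^{h+1} − x_1^hx_3, and q_j = x_1^{j+1}x_2^{h−j} − x_0x_3^jx_4^{h−j} (0 ≤ j ≤ h) form a Gröbner basis of the defining ideal of the projective closure of the Arslan curve C(h(h+1), h(h+1)+1, (h+1)^2, (h+1)^2+1), with respect to the degree reverse lexicographic order on k[x_0,x_1,x_2,x_3,x_4] induced by x_1 > x_2 > x_3 > x_4 > x_0. -/

import Mathlib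

open MvPolynomial

/-- The degree reverse lexicographic order on monomials in `m` variables, where
`v` lists the variables from greatest to least. -/
def DegRevLexLT {m : ℕ} (v : Fin m → Fin m) (a b : Fin m →₀ ℕ) : Prop :=
  (a.sum fun _ e => e) < (b.sum fun _ e => e) ∨
    ((a.sum fun _ e => e) = (b.sum fun _ e => e) ∧
      ∃ p : Fin m, b (v p) < a (v p) ∧ ∀ q : Fin m, p < q → a (v q) = b (v q))

/-- `μ` is the leading monomial of `f` with respect to `ord`. -/
def IsLeadMonomial {σ : Type*} {k : Type*} [CommSemiring k]
    (ord : (σ →₀ ℕ) → (σ →₀ ℕ) → Prop) (f : MvPolynomial σ k) (μ : σ →₀ ℕ) : Prop :=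
  μ ∈ f.support ∧ ∀ μ' ∈ f.support, μ' ≠ μ → ord μ' μ

/-- `G` is a Gröbner basis of the ideal `I` with respect to `ord`. -/
def IsGroebnerBasis {σ : Type*} {k : Type*} [CommSemiring k]
    (ord : (σ →₀ ℕ) → (σ →₀ ℕ) → Prop) (I : Ideal (MvPolynomial σ k))
    (G : Set (MvPolynomial σ k)) : Prop :=
  (∀ g ∈ G, g ∈ I) ∧ Ideal.span G = I ∧
    ∀ f ∈ I, f ≠ 0 → ∃ g ∈ G, ∃ μg μf, IsLeadMonomial ord g μg ∧
      IsLeadMonomial ord f μf ∧ ∀ i, μg i ≤ μf i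

/-!
Each binomial rewrites its leading monomial to a smaller monomial of the same bidegree in `(s, t)`,
so every monomial reduces to a standard one (divisible by no leading monomial) of the same bidegree.
Distinct standard monomials have distinct bidegrees: up to powers of `x₀` and `x₄` they are
`x₁ ^ h * x₃` or satisfy `μ₂ μ₃ = 0` and `μ₁ + μ₂ + μ₃ ≤ h`, and in the latter case the exponent of
`s` modulo `n₄` has the base `h + 1` digits `μ₁ + μ₂` and `μ₁ + μ₃`. If the leading monomial of some
`f` in the toric ideal were standard, it would have to cancel against a smaller monomial of `f` of
the same bidegree, whose standard reduction would be a second standard monomial of that bidegree.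
-/

open Finsupp (single linearCombination)

section DegRevLex

variable {m : ℕ} {v : Fin m → Fin m} {a b : Fin m →₀ ℕ}

lemma degRevLexLT_iff_prodLex : DegRevLexLT v a b ↔
    Prod.Lex (· < ·) (· > ·) (a.degree, toColex (a ∘ v)) (b.degree, toColex (b ∘ v)) := by
  rw [Prod.lex_def]
  exact or_congr Iff.rfl <| and_congr Iff.rfl <| exists_congr fun p =>
    and_comm.trans <| and_congr_left' <| forall₂_congr fun _ _ => eq_comm

lemma DegRevLexLT.isWellOrder (hv : Function.Surjective v) : IsWellOrder _ (DegRevLexLT v) where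
  wf := by
    refine Subrelation.wf degRevLexLT_iff_prodLex.1 <|
      WellFounded.prod_lex_of_wellFoundedOn_fiber (f := Finsupp.degree)
        (g := fun a : Fin m →₀ ℕ => toColex (a ∘ v)) (InvImage.wf _ wellFounded_lt) fun d => ?_
    have : IsStrictOrder (Fin m →₀ ℕ)
        (Function.onFun (· > ·) fun a : Fin m →₀ ℕ => toColex (a ∘ v)) :=
      { irrefl := fun a => lt_irrefl (toColex (a ∘ v))
        trans := fun _ _ _ hab hbc => lt_trans hbc hab }
    exact (Finsupp.finite_of_degree_eq d).wellFoundedOn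
  trichotomous a b hab hba := by
    simp only [degRevLexLT_iff_prodLex, Prod.lex_def, not_or, not_and] at hab hba
    have hdeg : a.degree = b.degree := le_antisymm (not_lt.1 hba.1) (not_lt.1 hab.1)
    have hcomp : a ∘ v = b ∘ v :=
      toColex.injective <| le_antisymm (not_lt.1 (hab.2 hdeg)) (not_lt.1 (hba.2 hdeg.symm))
    exact DFunLike.coe_injective (hv.injective_comp_right hcomp)

lemma DegRevLexLT.add_right (hab : DegRevLexLT v a b) (c : Fin m →₀ ℕ) :
    DegRevLexLT v (a + c) (b + c) := by
  change a.degree < b.degree ∨ a.degree = b.degree ∧ _ at hab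
  change (a + c).degree < (b + c).degree ∨ (a + c).degree = (b + c).degree ∧ _
  simpa only [map_add, add_lt_add_iff_right, add_left_inj, Finsupp.add_apply] using hab

end DegRevLex

section LeadMonomial

variable {σ R : Type*} {ord : (σ →₀ ℕ) → (σ →₀ ℕ) → Prop}

lemma exists_isLeadMonomial [CommSemiring R] [IsStrictTotalOrder _ ord] {f : MvPolynomial σ R}
    (hf : f ≠ 0) : ∃ μ, IsLeadMonomial ord f μ := by
  classical
  obtain ⟨μ, hμ, hmax⟩ := @Finset.exists_max_image _ _ (linearOrderOfSTO ord) f.support id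
    (Finset.nonempty_iff_ne_empty.2 (mt support_eq_empty.1 hf))
  exact ⟨μ, hμ, fun ν hν hne => (hmax ν hν).resolve_left hne⟩

lemma isLeadMonomial_monomial_sub_monomial [CommRing R] [Nontrivial R] [Std.Irrefl ord]
    {a b : σ →₀ ℕ} (hba : ord b a) :
    IsLeadMonomial ord (monomial a 1 - monomial b 1 : MvPolynomial σ R) a := by
  classical
  have hne : b ≠ a := ne_of_irrefl hba
  refine ⟨by simp [hne], fun μ hμ hμa => ?_⟩
  have hμb : μ = b := by
    by_contra hμb
    simp [Ne.symm hμa, Ne.symm hμb] at hμ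
  exact hμb ▸ hba

end LeadMonomial

section ToricIdeal

variable {σ τ : Type*} (R : Type*) [CommRing R]

/-- The monomial parametrization `x_i ↦ y^{A i}` of an affine toric variety. -/
noncomputable def toricMap (A : σ → τ →₀ ℕ) : MvPolynomial σ R →ₐ[R] MvPolynomial τ R :=
  aeval fun i => monomial (A i) 1

/-- The toric ideal of the exponent vectors `A i`: the polynomial relations among the monomials
`y^{A i}`. -/
noncomputable def toricIdeal (A : σ → τ →₀ ℕ) : Ideal (MvPolynomial σ R) :=
  RingHom.ker (toricMap R A)

/-- The binomials `x^a - x^b` for the pairs of exponents with `rel a b`. In the applications `a` is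
the leading exponent, so that `rel` is read as the rewriting rule `x^a → x^b`. -/
def binomials (rel : (σ →₀ ℕ) → (σ →₀ ℕ) → Prop) : Set (MvPolynomial σ R) :=
  {f | ∃ a b, rel a b ∧ f = monomial a 1 - monomial b 1}

/-- The exponents of the standard monomials of the rewriting rules `rel`: those divisible by
no left-hand side. -/
def IsStandard (rel : (σ →₀ ℕ) → (σ →₀ ℕ) → Prop) (μ : σ →₀ ℕ) : Prop :=
  ∀ a b, rel a b → ¬ a ≤ μ

variable {R} {A : σ → τ →₀ ℕ} {rel ord : (σ →₀ ℕ) → (σ →₀ ℕ) → Prop}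

lemma toricMap_monomial (μ : σ →₀ ℕ) (c : R) :
    toricMap R A (monomial μ c) = monomial (linearCombination ℕ A μ) c := by
  simp only [toricMap, aeval_monomial, monomial_pow, one_pow, algebraMap_eq,
    Finsupp.linearCombination_apply, monomial_finsupp_sum_index]

lemma binomials_subset_toricIdeal
    (hweight : ∀ a b, rel a b → linearCombination ℕ A a = linearCombination ℕ A b) :
    binomials R rel ⊆ toricIdeal R A := by
  rintro _ ⟨a, b, hab, rfl⟩
  rw [SetLike.mem_coe, toricIdeal, RingHom.mem_ker, map_sub, toricMap_monomial, toricMap_monomial,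
    hweight a b hab, sub_self]

/-- Otherwise the term of `f` at `μ` could not cancel in the image of `f`. -/
lemma exists_mem_support_ne_of_mem_toricIdeal {f : MvPolynomial σ R} (hf : f ∈ toricIdeal R A)
    {μ : σ →₀ ℕ} (hμ : μ ∈ f.support) :
    ∃ ν ∈ f.support, ν ≠ μ ∧ linearCombination ℕ A ν = linearCombination ℕ A μ := by
  classical
  by_contra! hne
  have hcoeff : coeff (linearCombination ℕ A μ) (toricMap R A f) = coeff μ f := by
    conv_lhs => rw [f.as_sum, map_sum, coeff_sum]
    simp only [toricMap_monomial, coeff_monomial]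
    rw [Finset.sum_eq_single_of_mem μ hμ fun ν hν hνμ => if_neg (hne ν hν hνμ), if_pos rfl]
  rw [RingHom.mem_ker.1 hf, coeff_zero] at hcoeff
  exact mem_support_iff.1 hμ hcoeff.symm

lemma eq_zero_of_mem_toricIdeal_of_isStandard
    (hinj : Set.InjOn (linearCombination ℕ A) {μ | IsStandard rel μ}) {f : MvPolynomial σ R}
    (hf : f ∈ toricIdeal R A) (hstd : ∀ μ ∈ f.support, IsStandard rel μ) : f = 0 := by
  rw [← support_eq_empty, Finset.eq_empty_iff_forall_notMem]
  intro μ hμ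
  obtain ⟨ν, hν, hne, hweight⟩ := exists_mem_support_ne_of_mem_toricIdeal hf hμ
  exact hne (hinj (hstd ν hν) (hstd μ hμ) hweight)

/-- `ν` is obtained from `μ` by replacing a divisor of `x^μ` according to a rule of `rel`. -/
def RewriteStep (rel : (σ →₀ ℕ) → (σ →₀ ℕ) → Prop) (μ ν : σ →₀ ℕ) : Prop :=
  ∃ a b c, rel a b ∧ μ = a + c ∧ ν = b + c

open Relation (ReflTransGen)

lemma linearCombination_eq_of_rewrites
    (hweight : ∀ a b, rel a b → linearCombination ℕ A a = linearCombination ℕ A b)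
    {μ ν : σ →₀ ℕ} (h : ReflTransGen (RewriteStep rel) μ ν) :
    linearCombination ℕ A μ = linearCombination ℕ A ν := by
  induction h with
  | refl => rfl
  | tail _ hstep ih =>
    obtain ⟨a, b, c, hab, rfl, rfl⟩ := hstep
    rw [ih, map_add, map_add, hweight a b hab]

lemma monomial_sub_monomial_mem_span_of_rewrites {μ ν : σ →₀ ℕ}
    (h : ReflTransGen (RewriteStep rel) μ ν) (r : R) :
    monomial μ r - monomial ν r ∈ Ideal.span (binomials R rel) := by
  induction h with
  | refl => simp
  | tail _ hstep ih =>
    obtain ⟨a, b, c, hab, rfl, rfl⟩ := hstep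
    have hmul : monomial (a + c) r - monomial (b + c) r =
        monomial c r * (monomial a 1 - monomial b 1) := by
      simp only [mul_sub, monomial_mul, mul_one, add_comm c]
    rw [← sub_add_sub_cancel, hmul]
    exact add_mem ih (Ideal.mul_mem_left _ _ (Ideal.subset_span ⟨a, b, hab, rfl⟩))

lemma ord_of_rewriteStep (hord : ∀ a b, rel a b → ord b a)
    (hadd : ∀ a b c, ord a b → ord (a + c) (b + c)) {μ ν : σ →₀ ℕ} (h : RewriteStep rel μ ν) :
    ord ν μ := by
  obtain ⟨a, b, c, hab, rfl, rfl⟩ := h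
  exact hadd b a c (hord a b hab)

lemma eq_or_ord_of_rewrites [IsTrans _ ord] (hord : ∀ a b, rel a b → ord b a)
    (hadd : ∀ a b c, ord a b → ord (a + c) (b + c)) {μ ν : σ →₀ ℕ}
    (h : ReflTransGen (RewriteStep rel) μ ν) : ν = μ ∨ ord ν μ := by
  induction h with
  | refl => exact Or.inl rfl
  | tail _ hstep ih =>
    have hlt := ord_of_rewriteStep hord hadd hstep
    exact Or.inr (ih.elim (fun heq => heq ▸ hlt) (_root_.trans hlt))

lemma exists_isStandard_of_rewrites [IsWellFounded _ ord] (hord : ∀ a b, rel a b → ord b a)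
    (hadd : ∀ a b c, ord a b → ord (a + c) (b + c)) (μ : σ →₀ ℕ) :
    ∃ ν, IsStandard rel ν ∧ ReflTransGen (RewriteStep rel) μ ν := by
  induction μ using IsWellFounded.induction ord with
  | _ μ ih =>
  by_cases hμ : IsStandard rel μ
  · exact ⟨μ, hμ, .refl⟩
  · simp only [IsStandard, not_forall, not_not] at hμ
    obtain ⟨a, b, hab, hle⟩ := hμ
    obtain ⟨c, rfl⟩ := exists_add_of_le hle
    have hstep : RewriteStep rel (a + c) (b + c) := ⟨a, b, c, hab, rfl, rfl⟩
    obtain ⟨ν, hν, hrw⟩ := ih (b + c) (ord_of_rewriteStep hord hadd hstep)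
    exact ⟨ν, hν, hrw.head hstep⟩

lemma exists_isStandard_support_sub_mem_span [IsWellFounded _ ord]
    (hord : ∀ a b, rel a b → ord b a) (hadd : ∀ a b c, ord a b → ord (a + c) (b + c))
    (f : MvPolynomial σ R) :
    ∃ g : MvPolynomial σ R, (∀ μ ∈ g.support, IsStandard rel μ) ∧
      f - g ∈ Ideal.span (binomials R rel) := by
  classical
  induction f using MvPolynomial.induction_on' with
  | monomial μ r =>
    obtain ⟨ν, hν, hrw⟩ := exists_isStandard_of_rewrites hord hadd μ
    refine ⟨monomial ν r, fun κ hκ => ?_, monomial_sub_monomial_mem_span_of_rewrites hrw r⟩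
    rwa [Finset.mem_singleton.1 (support_monomial_subset hκ)]
  | add p q hp hq =>
    obtain ⟨p', hp', hpspan⟩ := hp
    obtain ⟨q', hq', hqspan⟩ := hq
    refine ⟨p' + q', fun μ hμ => ?_, by simpa only [add_sub_add_comm] using add_mem hpspan hqspan⟩
    exact (Finset.mem_union.1 (support_add hμ)).elim (hp' μ) (hq' μ)

lemma span_binomials_eq_toricIdeal [IsWellFounded _ ord] (hord : ∀ a b, rel a b → ord b a)
    (hadd : ∀ a b c, ord a b → ord (a + c) (b + c))
    (hweight : ∀ a b, rel a b → linearCombination ℕ A a = linearCombination ℕ A b)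
    (hinj : Set.InjOn (linearCombination ℕ A) {μ | IsStandard rel μ}) :
    Ideal.span (binomials R rel) = toricIdeal R A := by
  have hle : Ideal.span (binomials R rel) ≤ toricIdeal R A :=
    Ideal.span_le.2 (binomials_subset_toricIdeal hweight)
  refine le_antisymm hle fun f hf => ?_
  obtain ⟨g, hstd, hspan⟩ := exists_isStandard_support_sub_mem_span hord hadd f
  have hg : g ∈ toricIdeal R A := (Submodule.sub_mem_iff_right _ hf).1 (hle hspan)
  rwa [eq_zero_of_mem_toricIdeal_of_isStandard hinj hg hstd, sub_zero] at hspan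

lemma not_isStandard_of_isLeadMonomial [IsWellOrder _ ord] (hord : ∀ a b, rel a b → ord b a)
    (hadd : ∀ a b c, ord a b → ord (a + c) (b + c))
    (hweight : ∀ a b, rel a b → linearCombination ℕ A a = linearCombination ℕ A b)
    (hinj : Set.InjOn (linearCombination ℕ A) {μ | IsStandard rel μ}) {f : MvPolynomial σ R}
    (hf : f ∈ toricIdeal R A) {μ : σ →₀ ℕ} (hμ : IsLeadMonomial ord f μ) :
    ¬ IsStandard rel μ := by
  intro hstd
  obtain ⟨ν, hν, hne, hνμ⟩ := exists_mem_support_ne_of_mem_toricIdeal hf hμ.1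
  have hlt : ord ν μ := hμ.2 ν hν hne
  obtain ⟨κ, hκ, hrw⟩ := exists_isStandard_of_rewrites hord hadd ν
  obtain rfl : κ = μ := hinj hκ hstd ((linearCombination_eq_of_rewrites hweight hrw).symm.trans hνμ)
  rcases eq_or_ord_of_rewrites hord hadd hrw with heq | hgt
  · exact hne heq.symm
  · exact asymm hlt hgt

theorem isGroebnerBasis_binomials [IsWellOrder _ ord] (hord : ∀ a b, rel a b → ord b a)
    (hadd : ∀ a b c, ord a b → ord (a + c) (b + c))
    (hweight : ∀ a b, rel a b → linearCombination ℕ A a = linearCombination ℕ A b)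
    (hinj : Set.InjOn (linearCombination ℕ A) {μ | IsStandard rel μ}) :
    IsGroebnerBasis ord (toricIdeal R A) (binomials R rel) := by
  refine ⟨binomials_subset_toricIdeal hweight,
    span_binomials_eq_toricIdeal hord hadd hweight hinj, fun f hf hf0 => ?_⟩
  obtain ⟨μ, hμ⟩ := exists_isLeadMonomial (ord := ord) hf0
  have : Nontrivial R := nontrivial_of_ne _ _ (mem_support_iff.1 hμ.1)
  have hstd := not_isStandard_of_isLeadMonomial hord hadd hweight hinj hf hμ
  simp only [IsStandard, not_forall, not_not] at hstd
  obtain ⟨a, b, hab, hle⟩ := hstd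
  exact ⟨_, ⟨a, b, hab, rfl⟩, a, μ, isLeadMonomial_monomial_sub_monomial (hord a b hab), hμ, hle⟩

end ToricIdeal

section ArslanCurve

lemma single_add_single_le {σ : Type*} {i j : σ} (hij : i ≠ j) {m n : ℕ} {μ : σ →₀ ℕ}
    (hi : m ≤ μ i) (hj : n ≤ μ j) : single i m + single j n ≤ μ := by
  classical
  intro k
  simp only [Finsupp.add_apply, Finsupp.single_apply]
  grind

lemma eq_and_eq_of_mul_add_eq_mul_add {n m r m' r' : ℕ} (hr : r < n) (hr' : r' < n)
    (heq : n * m + r = n * m' + r') : m = m' ∧ r = r' := by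
  have hm := (Nat.div_mod_unique (a := n * m + r) (by omega)).2 ⟨add_comm _ _, hr⟩
  have hm' := (Nat.div_mod_unique (by omega)).2 ⟨(add_comm _ _).trans heq.symm, hr'⟩
  exact ⟨hm.1.symm.trans hm'.1, hm.2.symm.trans hm'.2⟩

/-- The pairs (leading exponent, trailing exponent) of the binomials `w`, `g_i`, `g_h` and `q_j`
attached to the Arslan curve. -/
inductive ArslanRel (h : ℕ) : (Fin 5 →₀ ℕ) → (Fin 5 →₀ ℕ) → Prop
  | w : ArslanRel h (single 2 1 + single 3 1) (single 1 1 + single 4 1)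
  | g (i : ℕ) (hi : i < h) :
    ArslanRel h (single 1 i + single 3 (h - i + 1)) (single 2 (i + 1) + single 4 (h - i))
  | gLast : ArslanRel h (single 2 (h + 1)) (single 1 h + single 3 1)
  | q (j : ℕ) (hj : j ≤ h) :
    ArslanRel h (single 1 (j + 1) + single 2 (h - j))
      (single 0 1 + single 3 j + single 4 (h - j))

/-- The exponents of `s` and `t` in the parametrization `x₀ ↦ s^{n₄}`,
`x_i ↦ s^{n₄ - n_i} t^{n_i}` of the projective closure of the Arslan curve, where
`n₄ - n₁ = h + 2`, `n₄ - n₂ = h + 1` and `n₄ - n₃ = 1`. -/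
noncomputable def arslanExponents (h : ℕ) : Fin 5 → Fin 2 →₀ ℕ :=
  ![single 0 ((h + 1) ^ 2 + 1),
    single 0 (h + 2) + single 1 (h * (h + 1)),
    single 0 (h + 1) + single 1 (h * (h + 1) + 1),
    single 0 1 + single 1 ((h + 1) ^ 2),
    single 1 ((h + 1) ^ 2 + 1)]

/-- The contribution `(h + 2) μ₁ + (h + 1) μ₂ + μ₃` of `x₁, x₂, x₃` to the exponent of `s`, grouped
so that for most standard monomials `μ₁ + μ₂` and `μ₁ + μ₃` are its digits in base `h + 1`. -/
def sWeight (h : ℕ) (μ : Fin 5 →₀ ℕ) : ℕ :=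
  (h + 1) * (μ 1 + μ 2) + (μ 1 + μ 3)

variable {h : ℕ} {a b μ ν : Fin 5 →₀ ℕ}

lemma linearCombination_arslanExponents_apply (r : Fin 2) :
    linearCombination ℕ (arslanExponents h) μ r = ∑ i, μ i * arslanExponents h i r := by
  simp [Finsupp.linearCombination_apply, Finsupp.sum_fintype]

lemma linearCombination_arslanExponents_zero : linearCombination ℕ (arslanExponents h) μ 0 =
    ((h + 1) ^ 2 + 1) * μ 0 + sWeight h μ := by
  rw [linearCombination_arslanExponents_apply, Fin.sum_univ_five]
  simp only [arslanExponents, Matrix.cons_val, Finsupp.add_apply, Finsupp.single_apply,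
    Fin.reduceEq, if_true, if_false, sWeight]
  ring

lemma linearCombination_arslanExponents_one : linearCombination ℕ (arslanExponents h) μ 1 =
    h * (h + 1) * μ 1 + (h * (h + 1) + 1) * μ 2 + (h + 1) ^ 2 * μ 3 + ((h + 1) ^ 2 + 1) * μ 4 := by
  rw [linearCombination_arslanExponents_apply, Fin.sum_univ_five]
  simp only [arslanExponents, Matrix.cons_val, Finsupp.add_apply, Finsupp.single_apply,
    Fin.reduceEq, if_true, if_false]
  ring

lemma ArslanRel.linearCombination_eq (hab : ArslanRel h a b) :
    linearCombination ℕ (arslanExponents h) a = linearCombination ℕ (arslanExponents h) b := by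
  refine Finsupp.ext (Fin.forall_fin_two.2 ?_)
  simp only [linearCombination_arslanExponents_zero, linearCombination_arslanExponents_one, sWeight]
  rcases hab with _ | ⟨i, hi⟩ | _ | ⟨j, hj⟩ <;>
    simp only [Finsupp.add_apply, Finsupp.single_apply, Fin.reduceEq, if_true, if_false]
  · exact ⟨by ring, by ring⟩
  · obtain ⟨m, rfl⟩ := Nat.exists_eq_add_of_le hi.le
    rw [Nat.add_sub_cancel_left]
    exact ⟨by ring, by ring⟩
  · exact ⟨by ring, by ring⟩
  · obtain ⟨m, rfl⟩ := Nat.exists_eq_add_of_le hj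
    rw [Nat.add_sub_cancel_left]
    exact ⟨by ring, by ring⟩

lemma ArslanRel.degRevLexLT (hab : ArslanRel h a b) : DegRevLexLT ![1, 2, 3, 4, 0] b a := by
  have hdeg : b.degree = a.degree := by
    cases hab <;> simp only [map_add, Finsupp.degree_single] <;> omega
  refine Or.inr ⟨hdeg, ?_⟩
  cases hab with
  | w => exact ⟨3, by simp, by simp [Fin.forall_fin_succ]⟩
  | g i hi => exact ⟨3, by simpa, by simp [Fin.forall_fin_succ]⟩
  | gLast => exact ⟨2, by simp, by simp [Fin.forall_fin_succ]⟩
  | q j hj => exact ⟨4, by simp, by simp [Fin.forall_fin_succ]⟩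

lemma IsStandard.arslan_cases (hh : 1 ≤ h) (hμ : IsStandard (ArslanRel h) μ) :
    ((μ 2 = 0 ∨ μ 3 = 0) ∧ μ 1 + μ 2 + μ 3 ≤ h) ∨ (μ 1 = h ∧ μ 2 = 0 ∧ μ 3 = 1) := by
  have hw : ¬ (1 ≤ μ 2 ∧ 1 ≤ μ 3) := fun ⟨h2, h3⟩ =>
    hμ _ _ .w (single_add_single_le (by decide) h2 h3)
  have hg : ∀ i < h, ¬ (i ≤ μ 1 ∧ h - i + 1 ≤ μ 3) := fun i hi ⟨h1, h3⟩ =>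
    hμ _ _ (.g i hi) (single_add_single_le (by decide) h1 h3)
  have hgLast : ¬ h + 1 ≤ μ 2 := fun h2 =>
    hμ _ _ .gLast (Finsupp.single_le_iff.2 h2)
  have hq : ∀ j ≤ h, ¬ (j + 1 ≤ μ 1 ∧ h - j ≤ μ 2) := fun j hj ⟨h1, h2⟩ =>
    hμ _ _ (.q j hj) (single_add_single_le (by decide) h1 h2)
  specialize hg (min (μ 1) (h - 1)) (by omega)
  specialize hq (min (μ 1 - 1) h) (by omega)
  omega

lemma IsStandard.sWeight_lt (hh : 1 ≤ h) (hμ : IsStandard (ArslanRel h) μ) :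
    sWeight h μ < (h + 1) ^ 2 + 1 := by
  unfold sWeight
  rcases hμ.arslan_cases hh with ⟨_, hle⟩ | ⟨h1, h2, h3⟩
  · nlinarith
  · rw [h1, h2, h3]
    nlinarith

lemma IsStandard.eq_of_sWeight_eq (hh : 1 ≤ h) (hμ : IsStandard (ArslanRel h) μ)
    (hν : IsStandard (ArslanRel h) ν) (heq : sWeight h μ = sWeight h ν) :
    μ 1 = ν 1 ∧ μ 2 = ν 2 ∧ μ 3 = ν 3 := by
  unfold sWeight at heq
  rcases hμ.arslan_cases hh with ⟨hμ0, hμle⟩ | ⟨hμ1, hμ2, hμ3⟩ <;>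
    rcases hν.arslan_cases hh with ⟨hν0, hνle⟩ | ⟨hν1, hν2, hν3⟩
  · obtain ⟨h12, h13⟩ := eq_and_eq_of_mul_add_eq_mul_add (by omega) (by omega) heq
    omega
  · rw [hν1, hν2, hν3] at heq
    nlinarith
  · rw [hμ1, hμ2, hμ3] at heq
    nlinarith
  · omega

lemma injOn_linearCombination_arslanExponents (hh : 1 ≤ h) :
    Set.InjOn (linearCombination ℕ (arslanExponents h)) {μ | IsStandard (ArslanRel h) μ} := by
  intro μ hμ ν hν heq
  have hs := DFunLike.congr_fun heq 0
  have ht := DFunLike.congr_fun heq 1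
  rw [linearCombination_arslanExponents_zero, linearCombination_arslanExponents_zero] at hs
  rw [linearCombination_arslanExponents_one, linearCombination_arslanExponents_one] at ht
  obtain ⟨h0, hw⟩ :=
    eq_and_eq_of_mul_add_eq_mul_add (hμ.sWeight_lt hh) (hν.sWeight_lt hh) hs
  obtain ⟨h1, h2, h3⟩ := hμ.eq_of_sWeight_eq hh hν hw
  rw [h1, h2, h3, add_right_inj] at ht
  have h4 : μ 4 = ν 4 := Nat.eq_of_mul_eq_mul_left (by positivity) ht
  ext i
  fin_cases i <;> assumption

variable (k : Type*) [CommRing k]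

lemma toricIdeal_arslanExponents :
    toricIdeal k (arslanExponents h) = RingHom.ker (aeval (R := k)
      ![X 0 ^ ((h + 1) ^ 2 + 1),
        X 0 ^ ((h + 1) ^ 2 + 1 - h * (h + 1)) * X 1 ^ (h * (h + 1)),
        X 0 ^ ((h + 1) ^ 2 + 1 - (h * (h + 1) + 1)) * X 1 ^ (h * (h + 1) + 1),
        X 0 ^ ((h + 1) ^ 2 + 1 - (h + 1) ^ 2) * X 1 ^ ((h + 1) ^ 2),
        (X 1 ^ ((h + 1) ^ 2 + 1) : MvPolynomial (Fin 2) k)]).toRingHom := by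
  have e₁ : (h + 1) ^ 2 + 1 - h * (h + 1) = h + 2 := Nat.sub_eq_of_eq_add (by ring)
  have e₂ : (h + 1) ^ 2 + 1 - (h * (h + 1) + 1) = h + 1 := Nat.sub_eq_of_eq_add (by ring)
  have e₃ : (h + 1) ^ 2 + 1 - (h + 1) ^ 2 = 1 := Nat.add_sub_cancel_left _ _
  rw [e₁, e₂, e₃]
  simp only [X_pow_eq_monomial, monomial_mul, mul_one]
  change RingHom.ker (aeval _) = RingHom.ker (aeval _)
  congr 2
  funext i
  fin_cases i <;> rfl

lemma binomials_arslanRel (hh : 1 ≤ h) : binomials k (ArslanRel h) =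
    {f | f = X 2 * X 3 - X 1 * X 4 ∨
      (∃ i, i ≤ h - 1 ∧ f = X 1 ^ i * X 3 ^ (h - i + 1) - X 2 ^ (i + 1) * X 4 ^ (h - i)) ∨
      f = X 2 ^ (h + 1) - X 1 ^ h * X 3 ∨
      (∃ j, j ≤ h ∧ f = X 1 ^ (j + 1) * X 2 ^ (h - j) - X 0 * X 3 ^ j * X 4 ^ (h - j))} := by
  ext f
  constructor
  · rintro ⟨_, _, hab, rfl⟩
    rcases hab with _ | ⟨i, hi⟩ | _ | ⟨j, hj⟩ <;>
      simp only [monomial_add_single, ← X_pow_eq_monomial, pow_one]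
    · exact .inl rfl
    · exact .inr (.inl ⟨i, Nat.le_sub_one_of_lt hi, rfl⟩)
    · exact .inr (.inr (.inl rfl))
    · exact .inr (.inr (.inr ⟨j, hj, rfl⟩))
  · rintro (rfl | ⟨i, hi, rfl⟩ | rfl | ⟨j, hj, rfl⟩)
    · refine ⟨_, _, .w, ?_⟩
      simp only [monomial_add_single, ← X_pow_eq_monomial, pow_one]
    · refine ⟨_, _, .g i (Nat.lt_of_le_sub_one hh hi), ?_⟩
      simp only [monomial_add_single, ← X_pow_eq_monomial]
    · refine ⟨_, _, .gLast, ?_⟩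
      simp only [monomial_add_single, ← X_pow_eq_monomial, pow_one]
    · refine ⟨_, _, .q j hj, ?_⟩
      simp only [monomial_add_single, ← X_pow_eq_monomial, pow_one]

end ArslanCurve

theorem arslan_projective_closure_groebner_basis_general
    (k : Type*) [CommRing k] (h : ℕ) (hh : 1 ≤ h) :
    letI n₁ : ℕ := h * (h + 1)
    letI n₂ : ℕ := h * (h + 1) + 1
    letI n₃ : ℕ := (h + 1) ^ 2
    letI n₄ : ℕ := (h + 1) ^ 2 + 1
    letI s : MvPolynomial (Fin 2) k := X 0
    letI t : MvPolynomial (Fin 2) k := X 1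
    letI I : Ideal (MvPolynomial (Fin 5) k) :=
      RingHom.ker (aeval (R := k)
        ![s ^ n₄, s ^ (n₄ - n₁) * t ^ n₁, s ^ (n₄ - n₂) * t ^ n₂,
          s ^ (n₄ - n₃) * t ^ n₃, t ^ n₄]).toRingHom
    letI x₀ : MvPolynomial (Fin 5) k := X 0
    letI x₁ : MvPolynomial (Fin 5) k := X 1
    letI x₂ : MvPolynomial (Fin 5) k := X 2
    letI x₃ : MvPolynomial (Fin 5) k := X 3
    letI x₄ : MvPolynomial (Fin 5) k := X 4
    letI G : Set (MvPolynomial (Fin 5) k) :=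
      {q | q = x₂ * x₃ - x₁ * x₄ ∨
        (∃ i, i ≤ h - 1 ∧
          q = x₁ ^ i * x₃ ^ (h - i + 1) - x₂ ^ (i + 1) * x₄ ^ (h - i)) ∨
        q = x₂ ^ (h + 1) - x₁ ^ h * x₃ ∨
        (∃ j, j ≤ h ∧
          q = x₁ ^ (j + 1) * x₂ ^ (h - j) - x₀ * x₃ ^ j * x₄ ^ (h - j))}
    IsGroebnerBasis (DegRevLexLT ![1, 2, 3, 4, 0]) I G := by
  have : IsWellOrder _ (DegRevLexLT ![(1 : Fin 5), 2, 3, 4, 0]) :=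
    DegRevLexLT.isWellOrder (by decide)
  rw [← toricIdeal_arslanExponents, ← binomials_arslanRel k hh]
  exact isGroebnerBasis_binomials (fun _ _ => ArslanRel.degRevLexLT)
    (fun _ _ c hab => hab.add_right c) (fun _ _ => ArslanRel.linearCombination_eq)
    (injOn_linearCombination_arslanExponents hh)

/-- For `h ≥ 2`, the polynomials `w`, `g_i` (`0 ≤ i ≤ h`) and `q_j`
(`0 ≤ j ≤ h`) form a Gröbner basis of the defining ideal of the projective
closure of the Arslan curve `C(h(h+1), h(h+1)+1, (h+1)², (h+1)²+1)` with
respect to degrevlex with `x₁ > x₂ > x₃ > x₄ > x₀`.  Here the variable with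
index `0` is `x₀` and the defining ideal of the projective closure is the
kernel of `x₀ ↦ s^{n₄}`, `x_i ↦ s^{n₄-n_i} t^{n_i}`. -/
theorem arslan_projective_closure_groebner_basis
    (k : Type*) [Field k] (h : ℕ) (hh : 2 ≤ h) :
    letI n₁ : ℕ := h * (h + 1)
    letI n₂ : ℕ := h * (h + 1) + 1
    letI n₃ : ℕ := (h + 1) ^ 2
    letI n₄ : ℕ := (h + 1) ^ 2 + 1
    letI s : MvPolynomial (Fin 2) k := X 0
    letI t : MvPolynomial (Fin 2) k := X 1
    letI I : Ideal (MvPolynomial (Fin 5) k) :=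
      RingHom.ker (aeval (R := k)
        ![s ^ n₄, s ^ (n₄ - n₁) * t ^ n₁, s ^ (n₄ - n₂) * t ^ n₂,
          s ^ (n₄ - n₃) * t ^ n₃, t ^ n₄]).toRingHom
    letI x₀ : MvPolynomial (Fin 5) k := X 0
    letI x₁ : MvPolynomial (Fin 5) k := X 1
    letI x₂ : MvPolynomial (Fin 5) k := X 2
    letI x₃ : MvPolynomial (Fin 5) k := X 3
    letI x₄ : MvPolynomial (Fin 5) k := X 4
    letI G : Set (MvPolynomial (Fin 5) k) :=
      {q | q = x₂ * x₃ - x₁ * x₄ ∨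
        (∃ i, i ≤ h - 1 ∧
          q = x₁ ^ i * x₃ ^ (h - i + 1) - x₂ ^ (i + 1) * x₄ ^ (h - i)) ∨
        q = x₂ ^ (h + 1) - x₁ ^ h * x₃ ∨
        (∃ j, j ≤ h ∧
          q = x₁ ^ (j + 1) * x₂ ^ (h - j) - x₀ * x₃ ^ j * x₄ ^ (h - j))}
    IsGroebnerBasis (DegRevLexLT ![1, 2, 3, 4, 0]) I G :=
  arslan_projective_closure_groebner_basis_general k h (one_le_two.trans hh)
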